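/- Under the compact nonzero-sum game setup with the quantization condition lim_{δ→0} ω_δ(2δ) = 0, let T ∈ ℕ be the horizon and for each δ > 0 let π*_δ be a Markov perfect Nash equilibrium of the finite δ-model. Then for each player i = 1,…,N and each t = 0,…,T, sup_{x∈X} |J^i_t(π*_δ; x) − J*_t(π^{*,-i}_δ; x)| → 0 as δ → 0, where J^i_t(π*_δ;·) is the cost-to-go of player i at time t in the original model under the extended joint equilibrium policy and J*_t(π^{*,-i}_δ;·) is the original-model best-response value at time t against the extended policies of the other players. -/

import Mathlib

open MeasureTheory Filter Topology

noncomputable section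

/-- Total variation distance between two measures:
`‖μ − ν‖_TV = 2 sup_{D measurable} |μ(D) − ν(D)|`. -/
def tvDist {α : Type*} [MeasurableSpace α] (μ ν : Measure α) : ℝ :=
  2 * ⨆ D : {D : Set α // MeasurableSet D}, |(μ D.1).toReal - (ν D.1).toReal|

/-- The normalized restriction `ν^z_δ` of `ν` to the quantization cell `Q⁻¹{z}`. -/
def cellMeasure {X : Type*} [MeasurableSpace X] (ν : Measure X) (Q : X → X) (z : X) :
    Measure X :=
  (ν (Q ⁻¹' {z}))⁻¹ • ν.restrict (Q ⁻¹' {z})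


/-! ### Helper lemmas -/

lemma aux_integrable {α : Type*} [MeasurableSpace α] (μ : Measure α) [IsProbabilityMeasure μ]
    {f : α → ℝ} (hf : Measurable f) {M : ℝ} (hM : ∀ x, |f x| ≤ M) : Integrable f μ :=
  Integrable.of_bound hf.aestronglyMeasurable M (Eventually.of_forall hM)

lemma aux_abs_integral_le {α : Type*} [MeasurableSpace α] (μ : Measure α)
    [IsProbabilityMeasure μ] {f : α → ℝ} {M : ℝ} (hM : ∀ᵐ x ∂μ, |f x| ≤ M) :
    |∫ x, f x ∂μ| ≤ M := by
  have := norm_integral_le_of_norm_le_const (μ := μ) (f := f) (C := M) hM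
  simpa using this

lemma aux_avg {α : Type*} [MeasurableSpace α] (μ : Measure α)
    [IsProbabilityMeasure μ] {f : α → ℝ} (hf : Integrable f μ) {r K : ℝ}
    (h : ∀ᵐ x ∂μ, |r - f x| ≤ K) : |r - ∫ x, f x ∂μ| ≤ K := by
  have e : r - ∫ x, f x ∂μ = ∫ x, (r - f x) ∂μ := by
    rw [integral_sub (integrable_const r) hf]; simp
  rw [e]
  exact aux_abs_integral_le μ h

lemma aux_diff {α : Type*} [MeasurableSpace α] (μ : Measure α)
    [IsProbabilityMeasure μ] {f g : α → ℝ} (hf : Integrable f μ) (hg : Integrable g μ) {K : ℝ}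
    (h : ∀ x, |f x - g x| ≤ K) : |∫ x, f x ∂μ - ∫ x, g x ∂μ| ≤ K := by
  rw [← integral_sub hf hg]
  exact aux_abs_integral_le μ (Eventually.of_forall h)

lemma aux_layer {α : Type*} [MeasurableSpace α] (μ : Measure α) [IsProbabilityMeasure μ]
    {f : α → ℝ} (hf : Measurable f) {M : ℝ} (hM : ∀ x, |f x| ≤ M) :
    ∫ x, f x ∂μ = (∫ s in Set.Ioc 0 (2 * M), (μ {x | s ≤ f x + M}).toReal) - M := by
  have hi := aux_integrable μ hf hM
  have h1 : Integrable (fun x => f x + M) μ := hi.add (integrable_const M)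
  have h2 := h1.integral_eq_integral_Ioc_meas_le (M := 2 * M)
    (Eventually.of_forall fun x => by have := abs_le.1 (hM x); simp only [Pi.zero_apply]; linarith)
    (Eventually.of_forall fun x => by have := abs_le.1 (hM x); simp only; linarith)
  rw [integral_add hi (integrable_const M)] at h2
  simp only [integral_const, smul_eq_mul, measureReal_def, measure_univ, ENNReal.toReal_one,
    one_mul] at h2
  linarith

lemma aux_layer_meas {α : Type*} [MeasurableSpace α] (μ : Measure α) [IsProbabilityMeasure μ]
    (f : α → ℝ) (M : ℝ) : Measurable fun s : ℝ => (μ {x | s ≤ f x + M}).toReal := by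
  apply Antitone.measurable
  intro s s' h
  apply ENNReal.toReal_mono (measure_ne_top _ _)
  apply measure_mono
  intro x hx
  exact le_trans h hx

lemma aux_prob_le {α : Type*} [MeasurableSpace α] (μ : Measure α) [IsProbabilityMeasure μ]
    (D : Set α) : |(μ D).toReal| ≤ 1 := by
  rw [abs_of_nonneg ENNReal.toReal_nonneg]
  exact ENNReal.toReal_le_of_le_ofReal zero_le_one (by simpa using prob_le_one)

lemma aux_prob_diff {α : Type*} [MeasurableSpace α] (μ ν : Measure α) [IsProbabilityMeasure μ]
    [IsProbabilityMeasure ν] (D : Set α) : |(μ D).toReal - (ν D).toReal| ≤ 1 := by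
  have h1 := aux_prob_le μ D
  have h2 := aux_prob_le ν D
  have h3 : 0 ≤ (μ D).toReal := ENNReal.toReal_nonneg
  have h4 : 0 ≤ (ν D).toReal := ENNReal.toReal_nonneg
  rw [abs_le] at *
  constructor <;> linarith

lemma aux_tv_le_two {α : Type*} [MeasurableSpace α] (μ ν : Measure α) [IsProbabilityMeasure μ]
    [IsProbabilityMeasure ν] : tvDist μ ν ≤ 2 := by
  unfold tvDist
  have : Nonempty {D : Set α // MeasurableSet D} := ⟨⟨∅, MeasurableSet.empty⟩⟩
  have := ciSup_le (fun D : {D : Set α // MeasurableSet D} => aux_prob_diff μ ν D.1)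
  linarith

lemma aux_le_tv {α : Type*} [MeasurableSpace α] (μ ν : Measure α) [IsProbabilityMeasure μ]
    [IsProbabilityMeasure ν] {D : Set α} (hD : MeasurableSet D) :
    2 * |(μ D).toReal - (ν D).toReal| ≤ tvDist μ ν := by
  unfold tvDist
  have : BddAbove (Set.range fun D : {D : Set α // MeasurableSet D} =>
      |(μ D.1).toReal - (ν D.1).toReal|) := by
    refine ⟨1, ?_⟩
    rintro _ ⟨D, rfl⟩
    exact aux_prob_diff μ ν D.1
  have := le_ciSup this ⟨D, hD⟩
  simp only at this
  linarith

lemma aux_tv_integral {α : Type*} [MeasurableSpace α] (μ ν : Measure α) [IsProbabilityMeasure μ]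
    [IsProbabilityMeasure ν] {f : α → ℝ} (hf : Measurable f) {M : ℝ} (hM0 : 0 ≤ M)
    (hM : ∀ x, |f x| ≤ M) : |∫ x, f x ∂μ - ∫ x, f x ∂ν| ≤ M * tvDist μ ν := by
  have hI : ∀ (m : Measure α) [IsProbabilityMeasure m], Integrable
      (fun s : ℝ => (m {x | s ≤ f x + M}).toReal) (volume.restrict (Set.Ioc 0 (2 * M))) := by
    intro m _
    refine Integrable.of_bound (aux_layer_meas m f M).aestronglyMeasurable 1 ?_
    exact Eventually.of_forall fun s => aux_prob_le m _
  rw [aux_layer μ hf hM, aux_layer ν hf hM, sub_sub_sub_cancel_right,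
    ← integral_sub (hI μ) (hI ν)]
  have := norm_integral_le_of_norm_le_const (μ := volume.restrict (Set.Ioc 0 (2 * M)))
    (f := fun s => (μ {x | s ≤ f x + M}).toReal - (ν {x | s ≤ f x + M}).toReal)
    (C := tvDist μ ν / 2) (Eventually.of_forall fun s => by
      have := aux_le_tv μ ν (D := {x | s ≤ f x + M})
        (measurableSet_le measurable_const (hf.add_const M))
      rw [Real.norm_eq_abs]
      linarith)
  rw [Real.norm_eq_abs] at this
  refine this.trans (le_of_eq ?_)
  simp [measureReal_def, hM0]
  ring

lemma aux_cont {Y α : Type*} [TopologicalSpace Y] [FirstCountableTopology Y] [MeasurableSpace α]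
    (κ : Y → Measure α) (hκ : ∀ y, IsProbabilityMeasure (κ y))
    (hset : ∀ D : Set α, MeasurableSet D → Continuous fun y => (κ y D).toReal)
    {f : α → ℝ} (hf : Measurable f) {M : ℝ} (hM : ∀ x, |f x| ≤ M) :
    Continuous fun y => ∫ x, f x ∂(κ y) := by
  have e : (fun y => ∫ x, f x ∂(κ y)) = fun y =>
      (∫ s in Set.Ioc 0 (2 * M), (κ y {x | s ≤ f x + M}).toReal) - M := by
    funext y
    exact aux_layer (κ y) hf hM
  rw [e]
  refine Continuous.sub ?_ continuous_const
  refine continuous_of_dominated (bound := fun _ => (1 : ℝ)) ?_ ?_ ?_ ?_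
  · intro y
    exact (aux_layer_meas (κ y) f M).aestronglyMeasurable
  · intro y
    exact Eventually.of_forall fun s => aux_prob_le (κ y) _
  · exact integrable_const _
  · exact Eventually.of_forall fun s =>
      hset _ (measurableSet_le measurable_const (hf.add_const M))

lemma aux_piece {X : Type*} [MeasurableSpace X] [MeasurableSingletonClass X] (S : Finset X)
    (Q : X → X) (hQ : Measurable Q) (hS : ∀ x, Q x ∈ S) (g : X → X → ℝ)
    (hg : ∀ z, Measurable (g z)) : Measurable fun x => g (Q x) x := by
  classical
  have e : (fun x => g (Q x) x) = fun x => ∑ z ∈ S, (Q ⁻¹' {z}).indicator (g z) x := by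
    funext x
    rw [Finset.sum_eq_single (Q x)]
    · simp
    · intro b _ hb
      simp [Set.indicator, hb.symm]
    · intro h
      exact absurd (hS x) h
  rw [e]
  exact Finset.measurable_sum _ fun z _ => (hg z).indicator (hQ (measurableSet_singleton z))

lemma aux_pi_update {N : ℕ} {A : Fin N → Type*} [∀ i, MeasurableSpace (A i)]
    (μ : ∀ j, Measure (A j)) [∀ j, IsProbabilityMeasure (μ j)] (i : Fin N) (a : A i) :
    Measure.pi (Function.update μ i (Measure.dirac a)) =
      (Measure.pi μ).map (fun b => Function.update b i a) := by
  let f : ∀ j, A j → A j := Function.update (fun _ => id) i (fun _ => a)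
  have hfm : ∀ j, Measurable (f j) := by
    intro j
    by_cases h : j = i
    · subst h; simp only [f, Function.update_self]; exact measurable_const
    · simp only [f, Function.update_of_ne h]; exact measurable_id
  have : ∀ j, IsProbabilityMeasure ((μ j).map (f j)) := fun j =>
    Measure.isProbabilityMeasure_map (hfm j).aemeasurable
  have h := Measure.pi_map_pi (μ := μ) (f := f) (fun j => (hfm j).aemeasurable)
  have e1 : (fun (b : ∀ j, A j) j => f j (b j)) = fun b => Function.update b i a := by
    funext b j
    by_cases h : j = i
    · subst h; simp [f]
    · simp [f, Function.update_of_ne h]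
  have e2 : (fun j => (μ j).map (f j)) = Function.update μ i (Measure.dirac a) := by
    funext j
    by_cases h : j = i
    · subst h; simp [f]
    · simp [f, Function.update_of_ne h]
  rw [e1] at h
  rw [h, e2]

lemma aux_cell_prob {X : Type*} [MeasurableSpace X] (ν : Measure X) [IsProbabilityMeasure ν]
    (Q : X → X) (z : X) (h : 0 < ν (Q ⁻¹' {z})) : IsProbabilityMeasure (cellMeasure ν Q z) := by
  constructor
  simp only [cellMeasure, Measure.smul_apply, Measure.restrict_apply MeasurableSet.univ,
    Set.univ_inter, smul_eq_mul]
  exact ENNReal.inv_mul_cancel h.ne' (measure_ne_top _ _)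

lemma aux_cell_ae {X : Type*} [MeasurableSpace X] [MeasurableSingletonClass X] (ν : Measure X)
    (Q : X → X) (hQ : Measurable Q) (z : X) : ∀ᵐ x ∂(cellMeasure ν Q z), Q x = z := by
  unfold cellMeasure
  apply Measure.ae_smul_measure
  exact ae_restrict_mem (hQ (measurableSet_singleton z))

/-- The one-stage integrand `c(x,b) + ∫ f dp(·|x,b)`. -/
def gG {X B : Type*} [MeasurableSpace X] (c : X → B → ℝ) (p : X → B → Measure X) (f : X → ℝ)
    (x : X) (b : B) : ℝ := c x b + ∫ y, f y ∂(p x b)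

lemma gG_cont {X B : Type*} [MeasurableSpace X] [TopologicalSpace X] [TopologicalSpace B]
    [FirstCountableTopology X] [FirstCountableTopology B]
    {c : X → B → ℝ} {p : X → B → Measure X}
    (hc : Continuous fun q : X × B => c q.1 q.2)
    (hpp : ∀ x a, IsProbabilityMeasure (p x a))
    (hps : ∀ D : Set X, MeasurableSet D → Continuous fun q : X × B => (p q.1 q.2 D).toReal)
    {f : X → ℝ} (hf : Measurable f) {M : ℝ} (hM : ∀ x, |f x| ≤ M) :
    Continuous fun q : X × B => gG c p f q.1 q.2 :=
  hc.add (aux_cont (fun q : X × B => p q.1 q.2) (fun q => hpp q.1 q.2) hps hf hM)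

lemma gG_bdd {X B : Type*} [MeasurableSpace X] {c : X → B → ℝ} {p : X → B → Measure X}
    {C : ℝ} (hC : ∀ x b, |c x b| ≤ C) (hpp : ∀ x a, IsProbabilityMeasure (p x a))
    {f : X → ℝ} {M : ℝ} (hM : ∀ x, |f x| ≤ M) (x : X) (b : B) : |gG c p f x b| ≤ C + M := by
  have := hpp x b
  exact (abs_add_le _ _).trans
    (add_le_add (hC x b) (aux_abs_integral_le _ (Eventually.of_forall hM)))

lemma gG_close {X B : Type*} [MeasurableSpace X] {c : X → B → ℝ} {p : X → B → Measure X}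
    (hpp : ∀ x a, IsProbabilityMeasure (p x a)) {Q : X → X} (hQ : Measurable Q)
    {f : X → ℝ} (hf : Measurable f) {M : ℝ} (hM0 : 0 ≤ M) (hM : ∀ x, |f x| ≤ M)
    (hfQ : ∀ x, f x = f (Q x))
    {g : X → ℝ} (hg : Measurable g) {M' : ℝ} (hM' : ∀ x, |g x| ≤ M')
    {K : ℝ} (hK : ∀ x, |g x - f x| ≤ K) {η : ℝ} {x y : X} {a b : B}
    (h1 : |c x a - c y b| ≤ η) (h2 : tvDist ((p x a).map Q) ((p y b).map Q) ≤ η) :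
    |gG c p g x a - gG c p f y b| ≤ K + (1 + M) * η := by
  have := hpp x a
  have := hpp y b
  have e : ∀ u d, ∫ w, f w ∂(p u d) = ∫ w, f w ∂((p u d).map Q) := by
    intro u d
    rw [integral_map hQ.aemeasurable hf.aestronglyMeasurable]
    exact integral_congr_ae (Eventually.of_forall hfQ)
  have h3 := aux_diff (p x a) (aux_integrable _ hg hM') (aux_integrable _ hf hM) hK
  have : IsProbabilityMeasure ((p x a).map Q) := Measure.isProbabilityMeasure_map hQ.aemeasurable
  have : IsProbabilityMeasure ((p y b).map Q) := Measure.isProbabilityMeasure_map hQ.aemeasurable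
  have h4 := aux_tv_integral ((p x a).map Q) ((p y b).map Q) hf hM0 hM
  rw [← e, ← e] at h4
  have h5 := mul_le_mul_of_nonneg_left h2 hM0
  unfold gG
  rw [abs_le] at *
  constructor <;> linarith [h1.1, h1.2, h3.1, h3.2, h4.1, h4.2]

section core

set_option linter.unusedSectionVars false

variable {X : Type*} [MetricSpace X] [CompactSpace X] [MeasurableSpace X] [BorelSpace X]
    {N : ℕ} {A : Fin N → Type*} [∀ i, MetricSpace (A i)] [∀ i, CompactSpace (A i)]
    [∀ i, Nonempty (A i)] [∀ i, MeasurableSpace (A i)] [∀ i, BorelSpace (A i)]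
    {c : X → (∀ i, A i) → ℝ} {p : X → (∀ i, A i) → Measure X}

/-- joint continuity of the integral over mixed actions of the others -/
lemma core_cont (hc : Continuous fun q : X × (∀ i, A i) => c q.1 q.2)
    {C : ℝ} (hC : ∀ x b, |c x b| ≤ C)
    (hpp : ∀ x a, IsProbabilityMeasure (p x a))
    (hps : ∀ D : Set X, MeasurableSet D →
      Continuous fun q : X × (∀ i, A i) => (p q.1 q.2 D).toReal)
    {f : X → ℝ} (hf : Measurable f) {M : ℝ} (hM : ∀ x, |f x| ≤ M)
    (μ : Measure (∀ i, A i)) [IsProbabilityMeasure μ] (i : Fin N) :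
    Continuous fun q : X × A i => ∫ b, gG c p f q.1 (Function.update b i q.2) ∂μ := by
  have hG := gG_cont hc hpp hps hf hM
  refine continuous_of_dominated (bound := fun _ => C + M) ?_ ?_ (integrable_const _) ?_
  · intro q
    have : Continuous fun b : (∀ i, A i) => gG c p f q.1 (Function.update b i q.2) :=
      hG.comp (continuous_const.prodMk (continuous_id.update i continuous_const))
    exact this.measurable.aestronglyMeasurable
  · intro q
    exact Eventually.of_forall fun b => gG_bdd hC hpp hM _ _
  · refine Eventually.of_forall fun b => ?_
    exact hG.comp (continuous_fst.prodMk (continuous_const.update i continuous_snd))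

lemma core_cont' (hc : Continuous fun q : X × (∀ i, A i) => c q.1 q.2)
    {C : ℝ} (hC : ∀ x b, |c x b| ≤ C)
    (hpp : ∀ x a, IsProbabilityMeasure (p x a))
    (hps : ∀ D : Set X, MeasurableSet D →
      Continuous fun q : X × (∀ i, A i) => (p q.1 q.2 D).toReal)
    {f : X → ℝ} (hf : Measurable f) {M : ℝ} (hM : ∀ x, |f x| ≤ M)
    (μ : Measure (∀ i, A i)) [IsProbabilityMeasure μ] :
    Continuous fun x : X => ∫ b, gG c p f x b ∂μ := by
  have hG := gG_cont hc hpp hps hf hM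
  refine continuous_of_dominated (bound := fun _ => C + M) ?_ ?_ (integrable_const _) ?_
  · intro q
    have : Continuous fun b : (∀ i, A i) => gG c p f q b :=
      hG.comp (continuous_const.prodMk continuous_id)
    exact this.measurable.aestronglyMeasurable
  · intro q
    exact Eventually.of_forall fun b => gG_bdd hC hpp hM _ _
  · refine Eventually.of_forall fun b => ?_
    exact hG.comp (continuous_id.prodMk continuous_const)

lemma core_update (hc : Continuous fun q : X × (∀ i, A i) => c q.1 q.2)
    (hpp : ∀ x a, IsProbabilityMeasure (p x a))
    (hps : ∀ D : Set X, MeasurableSet D →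
      Continuous fun q : X × (∀ i, A i) => (p q.1 q.2 D).toReal)
    {f : X → ℝ} (hf : Measurable f) {M : ℝ} (hM : ∀ x, |f x| ≤ M)
    (μ : ∀ j, Measure (A j)) [∀ j, IsProbabilityMeasure (μ j)] (i : Fin N) (x : X) (a : A i) :
    ∫ b, gG c p f x b ∂(Measure.pi (Function.update μ i (Measure.dirac a))) =
      ∫ b, gG c p f x (Function.update b i a) ∂(Measure.pi μ) := by
  have hG := gG_cont hc hpp hps hf hM
  have hGx : Continuous fun b : (∀ i, A i) => gG c p f x b :=
      hG.comp (continuous_const.prodMk continuous_id)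
  have hu : Continuous fun b : (∀ i, A i) => Function.update b i a :=
    continuous_id.update i continuous_const
  rw [aux_pi_update, integral_map hu.measurable.aemeasurable hGx.measurable.aestronglyMeasurable]

/-- The full backward-induction estimate at fixed `δ` and fixed player. -/
lemma core_main (hc : Continuous fun q : X × (∀ i, A i) => c q.1 q.2)
    {C : ℝ} (hC0 : 0 ≤ C) (hC : ∀ x b, |c x b| ≤ C)
    (hpp : ∀ x a, IsProbabilityMeasure (p x a))
    (hps : ∀ D : Set X, MeasurableSet D →
      Continuous fun q : X × (∀ i, A i) => (p q.1 q.2 D).toReal)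
    (T : ℕ) (i : Fin N) {δ η : ℝ} (hδ : 0 < δ) (hη : 0 ≤ η)
    (Xd : Finset X) (Q : X → X) (Ad : Finset (A i)) (ν : Measure X) [IsProbabilityMeasure ν]
    (hQ_mem : ∀ x, Q x ∈ Xd) (hQ_dist : ∀ x, dist x (Q x) ≤ δ) (hQ : Measurable Q)
    (hAd : ∀ a : A i, ∃ b ∈ Ad, dist a b ≤ δ)
    (hν_pos : ∀ z ∈ Xd, 0 < ν (Q ⁻¹' {z}))
    (hcη : ∀ x y a b, dist x y + dist a b ≤ 2 * δ → |c x a - c y b| ≤ η)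
    (htv : ∀ x y a b, dist x y + dist a b ≤ 2 * δ →
      tvDist ((p x a).map Q) ((p y b).map Q) ≤ η)
    (π : (j : Fin N) → ℕ → X → Measure (A j))
    (hπ_prob : ∀ j t, t < T → ∀ x, IsProbabilityMeasure (π j t x))
    (hπ_const : ∀ j t, t < T → ∀ x, π j t x = π j t (Q x))
    (Jd Js Ji : ℕ → X → ℝ)
    (hJd_const : ∀ t, t ≤ T → ∀ x, Jd t x = Jd t (Q x))
    (hJd_T : ∀ x, Jd T x = 0) (hJs_T : ∀ x, Js T x = 0) (hJi_T : ∀ x, Ji T x = 0)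
    (hJd_rec : ∀ t, t < T → ∀ z ∈ Xd,
      Jd t z = sInf {v : ℝ | ∃ a ∈ Ad, v =
        ∫ x, (∫ b, gG c p (Jd (t+1)) x b
            ∂(Measure.pi (Function.update (fun j => π j t z) i (Measure.dirac a))))
          ∂(cellMeasure ν Q z)})
    (hJd_attain : ∀ t, t < T → ∀ z ∈ Xd,
      Jd t z =
        ∫ x, (∫ b, gG c p (Jd (t+1)) x b ∂(Measure.pi fun j => π j t z))
          ∂(cellMeasure ν Q z))
    (hJs_rec : ∀ t, t < T → ∀ x : X,
      Js t x = ⨅ a : A i,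
        ∫ b, gG c p (Js (t+1)) x b
          ∂(Measure.pi (Function.update (fun j => π j t x) i (Measure.dirac a))))
    (hJi_rec : ∀ t, t < T → ∀ x : X,
      Ji t x = ∫ b, gG c p (Ji (t+1)) x b ∂(Measure.pi fun j => π j t x)) :
    ∀ n t, t + n = T →
      ((Measurable (Jd t) ∧ ∀ x, |Jd t x| ≤ n * C) ∧
      (Measurable (Js t) ∧ ∀ x, |Js t x| ≤ n * C) ∧
      (Measurable (Ji t) ∧ ∀ x, |Ji t x| ≤ n * C)) ∧
      (∀ x, |Js t x - Jd t x| ≤ n * (2 * (1 + T * C) * η)) ∧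
      (∀ x, |Ji t x - Jd t x| ≤ n * (2 * (1 + T * C) * η)) := by
  intro n
  induction n with
  | zero =>
    intro t ht
    obtain rfl : t = T := by simpa using ht
    have e1 : Jd t = fun _ => 0 := funext hJd_T
    have e2 : Js t = fun _ => 0 := funext hJs_T
    have e3 : Ji t = fun _ => 0 := funext hJi_T
    rw [e1, e2, e3]
    simp
  | succ n ih =>
    intro t ht
    have htT : t < T := by omega
    obtain ⟨⟨⟨hdm, hdb⟩, ⟨hsm, hsb⟩, ⟨him, hib⟩⟩, hsd, hid⟩ := ih (t + 1) (by omega)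
    have hpr : ∀ x j, IsProbabilityMeasure (π j t x) := fun x j => hπ_prob j t htT x
    have hπQ : ∀ x, (fun j => π j t x) = fun j => π j t (Q x) := fun x =>
      funext fun j => hπ_const j t htT x
    have hdc := hJd_const (t + 1) (by omega)
    have hnT : (n : ℝ) * C ≤ T * C := by
      apply mul_le_mul_of_nonneg_right _ hC0
      exact_mod_cast (by omega : n ≤ T)
    have hnC : 0 ≤ (n : ℝ) * C := by positivity
    set M : ℝ := n * C with hMdef
    set E : ℝ := (1 + T * C) * η with hEdef
    have hE0 : 0 ≤ E := by positivity
    set K : ℝ := n * (2 * (1 + T * C) * η) with hKdef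
    have hME : (1 + M) * η ≤ E := mul_le_mul_of_nonneg_right (by linarith) hη
    have hK' : ((n + 1 : ℕ) : ℝ) * (2 * (1 + T * C) * η) = K + 2 * E := by
      rw [hKdef, hEdef]; push_cast; ring
    have hM' : ((n + 1 : ℕ) : ℝ) * C = C + M := by
      rw [hMdef]; push_cast; ring
    rw [hK', hM']
    have hcell : ∀ x y, Q x = Q y → dist x y ≤ 2 * δ := by
      intro x y h
      have h1 := hQ_dist x
      have h2 := hQ_dist y
      have h3 := dist_triangle_right x y (Q x)
      rw [← h] at h2
      linarith
    -- pointwise comparison of integrands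
    have hclose : ∀ (g : X → ℝ), Measurable g → (∀ x, |g x| ≤ M) → ∀ K', (∀ x, |g x - Jd (t+1) x| ≤ K') →
        ∀ x y a b, dist x y + dist a b ≤ 2 * δ →
        |gG c p g x a - gG c p (Jd (t+1)) y b| ≤ K' + E := by
      intro g hg hgb K' hgK x y a b hd
      have := gG_close hpp hQ hdm hnC hdb hdc hg hgb hgK (hcη x y a b hd) (htv x y a b hd)
      linarith
    have hclose0 : ∀ x y a b, dist x y + dist a b ≤ 2 * δ →
        |gG c p (Jd (t+1)) x a - gG c p (Jd (t+1)) y b| ≤ E := by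
      intro x y a b hd
      have := hclose (Jd (t+1)) hdm hdb 0 (by simp) x y a b hd
      linarith
    -- integrability of the integrands in b
    have hint : ∀ (g : X → ℝ), Measurable g → (∀ x, |g x| ≤ M) → ∀ x (m : Measure (∀ i, A i))
        [IsProbabilityMeasure m], Integrable (fun b => gG c p g x b) m := by
      intro g hg hgb x m _
      have : Continuous fun b : (∀ i, A i) => gG c p g x b :=
        (gG_cont hc hpp hps hg hgb).comp (continuous_const.prodMk continuous_id)
      exact aux_integrable m this.measurable (fun b => gG_bdd hC hpp hgb x b)
    have hintu : ∀ (g : X → ℝ), Measurable g → (∀ x, |g x| ≤ M) → ∀ x (a : A i)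
        (m : Measure (∀ i, A i))
        [IsProbabilityMeasure m], Integrable (fun b => gG c p g x (Function.update b i a)) m := by
      intro g hg hgb x a m _
      have : Continuous fun b : (∀ i, A i) => gG c p g x (Function.update b i a) :=
        (gG_cont hc hpp hps hg hgb).comp
          (continuous_const.prodMk (continuous_id.update i continuous_const))
      exact aux_integrable m this.measurable (fun b => gG_bdd hC hpp hgb x _)
    have hbd : ∀ (g : X → ℝ), (∀ x, |g x| ≤ M) → ∀ x (m : Measure (∀ i, A i))
        [IsProbabilityMeasure m], |∫ b, gG c p g x b ∂m| ≤ C + M := by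
      intro g hgb x m _
      exact aux_abs_integral_le m (Eventually.of_forall fun b => gG_bdd hC hpp hgb x b)
    have hbdu : ∀ (g : X → ℝ), (∀ x, |g x| ≤ M) → ∀ x (a : A i) (m : Measure (∀ i, A i))
        [IsProbabilityMeasure m], |∫ b, gG c p g x (Function.update b i a) ∂m| ≤ C + M := by
      intro g hgb x a m _
      exact aux_abs_integral_le m (Eventually.of_forall fun b => gG_bdd hC hpp hgb x _)
    -- rewrite updates
    have hJs' : ∀ x, Js t x = ⨅ a : A i, ∫ b, gG c p (Js (t+1)) x (Function.update b i a)
        ∂(Measure.pi fun j => π j t (Q x)) := by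
      intro x
      rw [hJs_rec t htT x, hπQ x]
      congr 1
      funext a
      exact core_update hc hpp hps hsm hsb _ i x a
    have hJi' : ∀ x, Ji t x = ∫ b, gG c p (Ji (t+1)) x b ∂(Measure.pi fun j => π j t (Q x)) := by
      intro x
      rw [hJi_rec t htT x, hπQ x]
    have hJd' : ∀ z ∈ Xd, Jd t z = sInf {v : ℝ | ∃ a ∈ Ad, v =
        ∫ x, (∫ b, gG c p (Jd (t+1)) x (Function.update b i a)
            ∂(Measure.pi fun j => π j t z)) ∂(cellMeasure ν Q z)} := by
      intro z hz
      rw [hJd_rec t htT z hz]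
      have : ∀ x a, _ := fun x a => core_update hc hpp hps hdm hdb (fun j => π j t z) i x a
      simp only [this]
    have hbb : ∀ x (m : Measure (∀ i, A i)) [IsProbabilityMeasure m],
        BddBelow (Set.range fun a : A i =>
          ∫ b, gG c p (Js (t+1)) x (Function.update b i a) ∂m) := by
      intro x m _
      refine ⟨-(C + M), ?_⟩
      rintro _ ⟨a, rfl⟩
      exact (abs_le.1 (hbdu _ hsb x a m)).1
    have hcp : ∀ x, IsProbabilityMeasure (cellMeasure ν Q (Q x)) := fun x =>
      aux_cell_prob ν Q (Q x) (hν_pos _ (hQ_mem x))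
    have hcae : ∀ x, ∀ᵐ y ∂(cellMeasure ν Q (Q x)), dist x y ≤ 2 * δ := by
      intro x
      filter_upwards [aux_cell_ae ν Q hQ (Q x)] with y hy
      exact hcell x y hy.symm
    refine ⟨⟨⟨?_, ?_⟩, ⟨?_, ?_⟩, ⟨?_, ?_⟩⟩, ?_, ?_⟩
    · have := aux_piece Xd Q hQ hQ_mem (fun z _ => Jd t z) (fun z => measurable_const)
      have e : Jd t = fun x => Jd t (Q x) := funext (hJd_const t (by omega))
      rw [e]; exact this
    · intro x
      rw [hJd_const t (by omega) x, hJd_attain t htT _ (hQ_mem x)]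
      have := hcp x
      exact aux_abs_integral_le _ (Eventually.of_forall fun y => hbd _ hdb y _)
    · have e : Js t = fun x => (fun z x => ⨅ a : A i,
          ∫ b, gG c p (Js (t+1)) x (Function.update b i a)
            ∂(Measure.pi fun j => π j t z)) (Q x) x := funext hJs'
      rw [e]
      refine aux_piece Xd Q hQ hQ_mem (fun z x => ⨅ a : A i,
          ∫ b, gG c p (Js (t+1)) x (Function.update b i a)
            ∂(Measure.pi fun j => π j t z)) fun z => ?_
      apply UpperSemicontinuous.measurable
      refine upperSemicontinuous_ciInf (fun x => hbb x _) fun a => ?_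
      exact Continuous.upperSemicontinuous
        ((core_cont hc hC hpp hps hsm hsb _ i).comp (continuous_id.prodMk continuous_const))
    · intro x
      rw [hJs' x, abs_le]
      constructor
      · exact le_ciInf fun a => (abs_le.1 (hbdu _ hsb x a _)).1
      · obtain ⟨a⟩ := (inferInstance : Nonempty (A i))
        exact (ciInf_le (hbb x _) a).trans (abs_le.1 (hbdu _ hsb x a _)).2
    · have e : Ji t = fun x => (fun z x =>
          ∫ b, gG c p (Ji (t+1)) x b ∂(Measure.pi fun j => π j t z)) (Q x) x := funext hJi'
      rw [e]
      refine aux_piece Xd Q hQ hQ_mem (fun z x =>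
          ∫ b, gG c p (Ji (t+1)) x b ∂(Measure.pi fun j => π j t z)) fun z => ?_
      exact (core_cont' hc hC hpp hps him hib _).measurable
    · intro x
      rw [hJi' x]
      exact hbd _ hib x _
    · intro x
      rw [hJs' x, hJd_const t (by omega) x, hJd' _ (hQ_mem x)]
      set z := Q x with hz
      set μ := Measure.pi fun j => π j t z with hμ
      have := hcp x
      -- comparison of values
      have key : ∀ (a a' : A i), dist a a' ≤ δ →
          |∫ b, gG c p (Js (t+1)) x (Function.update b i a) ∂μ -
            ∫ y, (∫ b, gG c p (Jd (t+1)) y (Function.update b i a') ∂μ) ∂(cellMeasure ν Q z)|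
            ≤ K + 2 * E := by
        intro a a' haa
        have hci : Continuous fun y : X =>
            ∫ b, gG c p (Jd (t+1)) y (Function.update b i a') ∂μ :=
          (core_cont hc hC hpp hps hdm hdb μ i).comp (continuous_id.prodMk continuous_const)
        refine aux_avg _ (aux_integrable _ hci.measurable (fun y => hbdu _ hdb y a' μ)) ?_
        filter_upwards [hcae x] with y hy
        refine aux_diff μ (hintu _ hsm hsb x a μ) (hintu _ hdm hdb y a' μ) fun b => ?_
        have hda : dist (Function.update b i a) (Function.update b i a') ≤ δ := by
          rw [dist_pi_le_iff hδ.le]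
          intro j
          by_cases h : j = i
          · subst h; simpa using haa
          · simp [Function.update_of_ne h, hδ.le]
        have s1 := hclose _ hsm hsb K hsd x x (Function.update b i a) (Function.update b i a')
          (by rw [dist_self]; linarith)
        have s2 := hclose0 x y (Function.update b i a') (Function.update b i a')
          (by rw [dist_self]; linarith)
        have := abs_sub_le (gG c p (Js (t+1)) x (Function.update b i a))
          (gG c p (Jd (t+1)) x (Function.update b i a'))
          (gG c p (Jd (t+1)) y (Function.update b i a'))
        linarith
      set S : Set ℝ := {v : ℝ | ∃ a ∈ Ad, v =
        ∫ y, (∫ b, gG c p (Jd (t+1)) y (Function.update b i a) ∂μ) ∂(cellMeasure ν Q z)} with hS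
      have hSne : S.Nonempty := by
        obtain ⟨a⟩ := (inferInstance : Nonempty (A i))
        obtain ⟨a', ha', _⟩ := hAd a
        exact ⟨_, a', ha', rfl⟩
      have hSb : BddBelow S := by
        refine ⟨-(C + M), ?_⟩
        rintro _ ⟨a, _, rfl⟩
        exact (abs_le.1 (aux_abs_integral_le (cellMeasure ν Q z)
          (Eventually.of_forall fun y => hbdu _ hdb y a μ))).1
      rw [abs_le]
      constructor
      · have : sInf S - (K + 2 * E) ≤ ⨅ a : A i,
            ∫ b, gG c p (Js (t+1)) x (Function.update b i a) ∂μ := by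
          refine le_ciInf fun a => ?_
          obtain ⟨a', ha', hd⟩ := hAd a
          have h1 := (abs_le.1 (key a a' hd)).1
          have h2 := csInf_le hSb ⟨a', ha', rfl⟩
          linarith
        linarith
      · have : (⨅ a : A i, ∫ b, gG c p (Js (t+1)) x (Function.update b i a) ∂μ) - (K + 2 * E)
            ≤ sInf S := by
          refine le_csInf hSne ?_
          rintro _ ⟨a, _, rfl⟩
          have h1 := (abs_le.1 (key a a (by simp [hδ.le]))).2
          have h2 := ciInf_le (hbb x μ) a
          linarith
        linarith
    · intro x
      rw [hJi' x, hJd_const t (by omega) x, hJd_attain t htT _ (hQ_mem x)]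
      have := hcp x
      have hci := core_cont' hc hC hpp hps hdm hdb (Measure.pi fun j => π j t (Q x))
      refine aux_avg _ (aux_integrable _ hci.measurable (fun y => hbd _ hdb y _)) ?_
      filter_upwards [hcae x] with y hy
      refine aux_diff _ (hint _ him hib x _) (hint _ hdm hdb y _) fun b => ?_
      have := hclose _ him hib K hid x y b b (by rw [dist_self]; linarith)
      linarith

end core

/-- Finite-horizon approximation of nonzero-sum Markov games (Theorem 4.2 of the paper):
the cost-to-go of each player under the extended finite-model Markov perfect equilibrium
converges uniformly to the original-model best-response value against the extended
policies of the other players. -/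
theorem finite_horizon_equilibrium_cost_approximation
    -- compact metric state space
    (X : Type*) [MetricSpace X] [CompactSpace X] [Nonempty X]
    [MeasurableSpace X] [BorelSpace X]
    -- compact metric action spaces of the N players
    (N : ℕ) (A : Fin N → Type*) [∀ i, MetricSpace (A i)] [∀ i, CompactSpace (A i)]
    [∀ i, Nonempty (A i)] [∀ i, MeasurableSpace (A i)] [∀ i, BorelSpace (A i)]
    -- bounded continuous one-stage cost functions
    (c : Fin N → X → (∀ i, A i) → ℝ)
    (hc : ∀ i, Continuous fun q : X × (∀ i, A i) => c i q.1 q.2)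
    -- setwise continuous Borel stochastic kernel
    (p : X → (∀ i, A i) → Measure X)
    (hp_prob : ∀ x a, IsProbabilityMeasure (p x a))
    (hp_meas : ∀ D : Set X, MeasurableSet D →
      Measurable fun q : X × (∀ i, A i) => p q.1 q.2 D)
    (hp_setwise : ∀ D : Set X, MeasurableSet D →
      Continuous fun q : X × (∀ i, A i) => (p q.1 q.2 D).toReal)
    -- finite horizon
    (T : ℕ)
    -- quantization data: finite δ-nets, nearest-point quantizer, weighting measures
    (Xd : ℝ → Finset X) (Q : ℝ → X → X) (Ad : ℝ → ∀ i, Finset (A i)) (ν : ℝ → Measure X)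
    (hXd_net : ∀ δ > (0:ℝ), ∀ x : X, ∃ z ∈ Xd δ, dist x z ≤ δ)
    (hQ_mem : ∀ δ > (0:ℝ), ∀ x, Q δ x ∈ Xd δ)
    (hQ_near : ∀ δ > (0:ℝ), ∀ x, ∀ z ∈ Xd δ, dist x (Q δ x) ≤ dist x z)
    (hQ_meas : ∀ δ > (0:ℝ), Measurable (Q δ))
    (hAd_net : ∀ δ > (0:ℝ), ∀ i, ∀ a : A i, ∃ b ∈ Ad δ i, dist a b ≤ δ)
    (hν_prob : ∀ δ > (0:ℝ), IsProbabilityMeasure (ν δ))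
    (hν_pos : ∀ δ > (0:ℝ), ∀ z ∈ Xd δ, 0 < ν δ (Q δ ⁻¹' {z}))
    -- the quantization condition `lim_{δ→0} ω_δ(2δ) = 0`
    (hquant : Tendsto
      (fun δ : ℝ => sSup {v : ℝ | ∃ x y : X, ∃ a b : ∀ i, A i,
        dist x y + dist a b ≤ 2 * δ ∧
        v = tvDist ((p x a).map (Q δ)) ((p y b).map (Q δ))})
      (𝓝[>] 0) (𝓝 0))
    -- (already extended) Markov policies of the finite δ-model: probability measures
    -- supported on the finite action nets, piecewise constant on quantization cells
    (π : ℝ → (i : Fin N) → ℕ → X → Measure (A i))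
    (hπ_prob : ∀ δ > (0:ℝ), ∀ i t, t < T → ∀ x, IsProbabilityMeasure (π δ i t x))
    (hπ_supp : ∀ δ > (0:ℝ), ∀ i t, t < T → ∀ x, π δ i t x (Ad δ i) = 1)
    (hπ_const : ∀ δ > (0:ℝ), ∀ i t, t < T → ∀ x, π δ i t x = π δ i t (Q δ x))
    -- the extended finite-model best-response values Ĵ*_{δ,t}(π^{*,-i}_δ;·)
    (Jd : ℝ → Fin N → ℕ → X → ℝ)
    (hJd_const : ∀ δ > (0:ℝ), ∀ i t, t ≤ T → ∀ x, Jd δ i t x = Jd δ i t (Q δ x))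
    (hJd_T : ∀ δ > (0:ℝ), ∀ i x, Jd δ i T x = 0)
    -- backward recursion of the finite δ-model, per state of the net
    (hJd_rec : ∀ δ > (0:ℝ), ∀ i t, t < T → ∀ z ∈ Xd δ,
      Jd δ i t z = sInf {v : ℝ | ∃ a ∈ Ad δ i, v =
        ∫ x, (∫ b, (c i x b + ∫ y, Jd δ i (t+1) y ∂(p x b))
            ∂(Measure.pi (Function.update (fun j => π δ j t z) i (Measure.dirac a))))
          ∂(cellMeasure (ν δ) (Q δ) z)})
    -- the minimum is attained by the equilibrium mixed action π^{*,i}_{δ,t}(z)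
    (hJd_attain : ∀ δ > (0:ℝ), ∀ i t, t < T → ∀ z ∈ Xd δ,
      Jd δ i t z =
        ∫ x, (∫ b, (c i x b + ∫ y, Jd δ i (t+1) y ∂(p x b))
            ∂(Measure.pi fun j => π δ j t z))
          ∂(cellMeasure (ν δ) (Q δ) z))
    -- the original-model best-response values J*_t(π^{*,-i}_δ;·) against the extended policies
    (Js : ℝ → Fin N → ℕ → X → ℝ)
    (hJs_T : ∀ δ > (0:ℝ), ∀ i x, Js δ i T x = 0)
    (hJs_rec : ∀ δ > (0:ℝ), ∀ i t, t < T → ∀ x : X,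
      Js δ i t x = ⨅ a : A i,
        ∫ b, (c i x b + ∫ y, Js δ i (t+1) y ∂(p x b))
          ∂(Measure.pi (Function.update (fun j => π δ j t x) i (Measure.dirac a))))
    -- the cost-to-go J^i_t(π*_δ;·) of player i in the original model under the
    -- extended joint equilibrium policy
    (Ji : ℝ → Fin N → ℕ → X → ℝ)
    (hJi_T : ∀ δ > (0:ℝ), ∀ i x, Ji δ i T x = 0)
    (hJi_rec : ∀ δ > (0:ℝ), ∀ i t, t < T → ∀ x : X,
      Ji δ i t x =
        ∫ b, (c i x b + ∫ y, Ji δ i (t+1) y ∂(p x b))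
          ∂(Measure.pi fun j => π δ j t x)) :
    -- conclusion: uniform convergence as δ → 0
    ∀ i : Fin N, ∀ t ≤ T,
      Tendsto (fun δ : ℝ => ⨆ x : X, |Ji δ i t x - Js δ i t x|) (𝓝[>] 0) (𝓝 0) := by
  intro i t ht
  obtain ⟨C, hC0, hC⟩ : ∃ C : ℝ, 0 ≤ C ∧ ∀ x b, |c i x b| ≤ C := by
    obtain ⟨C, hC⟩ := isCompact_univ.exists_bound_of_continuousOn (hc i).continuousOn
    refine ⟨max C 0, le_max_right _ _, fun x b => ?_⟩
    exact (hC (x, b) (Set.mem_univ _)).trans (le_max_left _ _)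
  have huc := CompactSpace.uniformContinuous_of_continuous (hc i)
  set L : ℝ := T * (2 * (1 + T * C)) with hL
  have hL0 : 0 ≤ L := by positivity
  rw [Metric.tendsto_nhds]
  intro ε hε
  set η : ℝ := ε / (2 * L + 1) / 2 with hη
  have hη0 : 0 < η := by positivity
  have hηε : 2 * L * η < ε := by
    have : η * 2 * (2 * L + 1) = ε := by rw [hη]; field_simp
    nlinarith
  obtain ⟨δ₀, hδ₀, hmod⟩ := Metric.uniformContinuous_iff.1 huc η hη0
  have hev1 : ∀ᶠ δ : ℝ in 𝓝[>] 0, δ < δ₀ / 2 :=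
    mem_nhdsWithin_of_mem_nhds (Iio_mem_nhds (by positivity))
  have hev2 := (Metric.tendsto_nhds.1 hquant) η hη0
  filter_upwards [hev1, hev2, self_mem_nhdsWithin] with δ h1 h2 hδ
  have hδ : 0 < δ := hδ
  have := hν_prob δ hδ
  have hQd : ∀ x, dist x (Q δ x) ≤ δ := by
    intro x
    obtain ⟨z, hz, hd⟩ := hXd_net δ hδ x
    exact (hQ_near δ hδ x z hz).trans hd
  have htv : ∀ x y a b, dist x y + dist a b ≤ 2 * δ →
      tvDist ((p x a).map (Q δ)) ((p y b).map (Q δ)) ≤ η := by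
    intro x y a b hd
    have hpr : ∀ x a, IsProbabilityMeasure ((p x a).map (Q δ)) := fun x a =>
      Measure.isProbabilityMeasure_map (hQ_meas δ hδ).aemeasurable
    rw [Real.dist_eq, sub_zero] at h2
    refine le_trans ?_ ((le_abs_self _).trans h2.le)
    refine le_csSup ?_ ⟨x, y, a, b, hd, rfl⟩
    refine ⟨2, ?_⟩
    rintro _ ⟨x, y, a, b, _, rfl⟩
    exact aux_tv_le_two _ _
  have hcη : ∀ x y a b, dist x y + dist a b ≤ 2 * δ → |c i x a - c i y b| ≤ η := by
    intro x y a b hd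
    have hx := dist_nonneg (x := x) (y := y)
    have ha := dist_nonneg (x := a) (y := b)
    have := hmod (a := (x, a)) (b := (y, b)) (by
      rw [Prod.dist_eq]; exact max_lt (by simp only; linarith) (by simp only; linarith))
    exact this.le
  obtain ⟨-, hs, hi⟩ := core_main (hc i) hC0 hC hp_prob hp_setwise T i hδ hη0.le (Xd δ) (Q δ)
    (Ad δ i) (ν δ) (hQ_mem δ hδ) hQd (hQ_meas δ hδ) (hAd_net δ hδ i) (hν_pos δ hδ) hcη htv
    (π δ) (hπ_prob δ hδ) (hπ_const δ hδ) (Jd δ i) (Js δ i) (Ji δ i) (hJd_const δ hδ i)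
    (hJd_T δ hδ i) (hJs_T δ hδ i) (hJi_T δ hδ i) (hJd_rec δ hδ i) (hJd_attain δ hδ i)
    (hJs_rec δ hδ i) (hJi_rec δ hδ i) (T - t) t (by omega)
  have hle : ((T - t : ℕ) : ℝ) * (2 * (1 + T * C) * η) ≤ L * η := by
    rw [hL, mul_assoc (T : ℝ)]
    apply mul_le_mul_of_nonneg_right _ (by positivity)
    exact_mod_cast Nat.sub_le T t
  have hall : ∀ x, |Ji δ i t x - Js δ i t x| ≤ 2 * L * η := by
    intro x
    have h3 := abs_le.1 ((hs x).trans hle)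
    have h4 := abs_le.1 ((hi x).trans hle)
    rw [abs_le]
    constructor <;> linarith [h3.1, h3.2, h4.1, h4.2]
  rw [Real.dist_eq, sub_zero, abs_of_nonneg (Real.iSup_nonneg fun x => abs_nonneg _)]
  exact (ciSup_le hall).trans_lt hηε

end
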